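/- arXiv:2502.05412 — 2 statements merged into one kernel-verified Lean document; each statement's English description precedes it below -/
import Mathlib

section
/- Let v be a norm on ℝ^n invariant under coordinate permutations, let γ : (a,b) → P_n be a curve that is differentiable at a point t₀ ∈ (a,b) (as a matrix-valued function). Then the metric derivative of γ at t₀ with respect to d_v exists and lim_{s→t₀} d_v(γ(s), γ(t₀)) / |s − t₀| = ‖γ(t₀)^{-1/2} γ'(t₀) γ(t₀)^{-1/2}‖_v. -/
noncomputable section
open scoped Classical
open Matrix Filter
open scoped ComplexOrder Topology

attribute [local instance] Matrix.normedAddCommGroup Matrix.normedSpace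

/-- `v(λ(H))` for Hermitian `H` (junk value `0` otherwise). -/
def vnorm {n : ℕ} (v : (Fin n → ℝ) → ℝ) (H : Matrix (Fin n) (Fin n) ℂ) : ℝ :=
  if h : H.IsHermitian then v h.eigenvalues else 0

/-- The positive semidefinite square root (junk value `0` off PSD matrices). -/
def matSqrt {n : ℕ} (X : Matrix (Fin n) (Fin n) ℂ) : Matrix (Fin n) (Fin n) ℂ :=
  if h : X.PosSemidef then
    (h.1.eigenvectorUnitary : Matrix (Fin n) (Fin n) ℂ) *
      Matrix.diagonal ((↑) ∘ Real.sqrt ∘ h.1.eigenvalues) *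
      (star h.1.eigenvectorUnitary : Matrix (Fin n) (Fin n) ℂ)
  else 0

/-- The Hermitian logarithm of a positive definite matrix, via the spectral
decomposition (junk value `0` off Hermitian matrices). -/
def mlog {n : ℕ} (X : Matrix (Fin n) (Fin n) ℂ) : Matrix (Fin n) (Fin n) ℂ :=
  if h : X.IsHermitian then
    (h.eigenvectorUnitary : Matrix (Fin n) (Fin n) ℂ) *
      Matrix.diagonal (fun i => (Real.log (h.eigenvalues i) : ℂ)) *
      (star h.eigenvectorUnitary : Matrix (Fin n) (Fin n) ℂ)
  else 0

/-- The invariant Finsler distance `d_v(X,Y) = ‖log (X^{-1/2} Y X^{-1/2})‖_v`. -/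
def dv {n : ℕ} (v : (Fin n → ℝ) → ℝ) (X Y : Matrix (Fin n) (Fin n) ℂ) : ℝ :=
  vnorm v (mlog ((matSqrt X)⁻¹ * Y * (matSqrt X)⁻¹))

/-!
The eigenvalue vector is continuous on Hermitian matrices: since the unitary group is compact, the
Hermitian matrices with a sorted diagonalization in a given closed set form a closed set. As
`X^{-1/2} Y X^{-1/2}` and `Y^{-1/2} X Y^{-1/2}` have mutually inverse spectra, `d_v` is symmetric,
so the curve may be normalized at the fixed point `γ(t₀)`: with `h = s - t₀` and `μ` the eigenvalues
of the conjugated difference quotient `γ(t₀)^{-1/2} ((γ(s) - γ(t₀)) / h) γ(t₀)^{-1/2}`, the ratio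
`d_v(γ(s), γ(t₀)) / |h|` is `v` of the vector `log (1 + h μᵢ) / h`. The quotient is Hermitian and
converges, hence so do its eigenvalues, and `log (1 + h μᵢ) / h` has the same limit as `μᵢ`.
-/

theorem exists_perm_eq_comp_of_map_univ_eq {ι α : Type*} [Fintype ι] {f g : ι → α}
    (h : Finset.univ.val.map f = Finset.univ.val.map g) : ∃ σ : Equiv.Perm ι, f = g ∘ σ := by
  have card_fiber (c : α) : Fintype.card {i // f i = c} = Fintype.card {i // g i = c} := by
    have hc := congrArg (Multiset.count c) h
    simp only [Multiset.count_map, eq_comm (a := c), ← Finset.filter_val, Finset.card_val] at hc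
    rw [Fintype.card_subtype, Fintype.card_subtype, hc]
  let e (c : α) := Fintype.equivOfCardEq (card_fiber c)
  exact ⟨Equiv.ofFiberEquiv e, funext fun i => (Equiv.ofFiberEquiv_map e i).symm⟩

theorem tendsto_inv_mul_sub_of_hasDerivAt {ι 𝕜 : Type*} [NontriviallyNormedField 𝕜] {l : Filter ι}
    {f : 𝕜 → 𝕜} {f' x c : 𝕜} {h a : ι → 𝕜} (hf : HasDerivAt f f' x) (hh : Tendsto h l (𝓝 0))
    (hne : ∀ᶠ i in l, h i ≠ 0) (ha : Tendsto a l (𝓝 c)) :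
    Tendsto (fun i => (h i)⁻¹ * (f (x + h i * a i) - f x)) l (𝓝 (c * f')) := by
  have hha : Tendsto (fun i => h i * a i) l (𝓝 0) := by simpa using hh.mul ha
  have hquot : Tendsto (fun i => (h i)⁻¹ • (h i * a i)) l (𝓝 c) :=
    ha.congr' (hne.mono fun i hi => by simp [hi])
  simpa using hf.hasFDerivAt.hasFDerivWithinAt.lim hha (.of_forall fun _ => Set.mem_univ _) hquot

theorem isHermitian_slope {m 𝕜 : Type*} [RCLike 𝕜] {γ : ℝ → Matrix m m 𝕜} {s t : ℝ}
    (hs : (γ s).IsHermitian) (ht : (γ t).IsHermitian) : (slope γ t s).IsHermitian :=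
  (hs.sub ht).smul (IsSelfAdjoint.all _)

theorem isHermitian_of_hasDerivAt {m 𝕜 : Type*} [Finite m] [RCLike 𝕜] {γ : ℝ → Matrix m m 𝕜}
    {A : Matrix m m 𝕜} {t : ℝ} (hγ : ∀ᶠ s in 𝓝 t, (γ s).IsHermitian) (hA : HasDerivAt γ A t) :
    A.IsHermitian :=
  have := Fintype.ofFinite m
  (hA.star.congr_of_eventuallyEq (hγ.mono fun _ hs => hs.symm)).unique hA

section Hermitian

variable {m 𝕜 : Type*} [Fintype m] [DecidableEq m] [RCLike 𝕜] {A : Matrix m m 𝕜}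

open Polynomial in
theorem exists_perm_eigenvalues_eq_comp (hA : A.IsHermitian) {d : m → ℝ}
    (h : A.charpoly = ∏ i, (X - C (d i : 𝕜))) : ∃ σ : Equiv.Perm m, hA.eigenvalues = d ∘ σ := by
  have hroots : A.charpoly.roots = Finset.univ.val.map (fun i => (d i : 𝕜)) := by
    rw [h, roots_prod _ _ (Finset.prod_ne_zero_iff.2 fun i _ => X_sub_C_ne_zero _)]
    simp
  have hre := congrArg (Multiset.map RCLike.re) (hA.roots_charpoly_eq_eigenvalues.symm.trans hroots)
  exact exists_perm_eq_comp_of_map_univ_eq (by simpa [Function.comp_def] using hre)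

theorem antitone_eigenvalues_comp_equivOfCardEq (hA : A.IsHermitian) :
    Antitone (hA.eigenvalues ∘ Fintype.equivOfCardEq (Fintype.card_fin (Fintype.card m))) := by
  convert hA.eigenvalues₀_antitone using 1
  ext k
  simp [Matrix.IsHermitian.eigenvalues]

theorem eigenvalues_eq_of_antitone (hA : A.IsHermitian) {U : Matrix m m 𝕜}
    (hU : U ∈ unitaryGroup m 𝕜) {d : m → ℝ}
    (hd : Antitone (d ∘ Fintype.equivOfCardEq (Fintype.card_fin (Fintype.card m))))
    (h : star U * A * U = diagonal (RCLike.ofReal ∘ d)) : hA.eigenvalues = d := by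
  set e := Fintype.equivOfCardEq (Fintype.card_fin (Fintype.card m))
  have hchar : A.charpoly = (diagonal (RCLike.ofReal ∘ d)).charpoly := by
    rw [← h, charpoly_mul_comm, ← mul_assoc, mem_unitaryGroup_iff.1 hU, one_mul]
  obtain ⟨σ, hσ⟩ := exists_perm_eigenvalues_eq_comp hA (hchar.trans (charpoly_diagonal _))
  have heig : Antitone ((d ∘ e) ∘ (e.trans σ).trans e.symm) := by
    have hcomp : (d ∘ e) ∘ (e.trans σ).trans e.symm = hA.eigenvalues ∘ e := by
      ext k
      simp [hσ]
    exact hcomp ▸ antitone_eigenvalues_comp_equivOfCardEq hA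
  have hsorted := Tuple.unique_antitone heig (τ := 1) hd
  rw [hσ]
  ext i
  simpa using congrFun hsorted (e.symm i)

theorem isCompact_unitaryGroup : IsCompact (unitaryGroup m 𝕜 : Set (Matrix m m 𝕜)) :=
  (isCompact_univ_pi fun _ => isCompact_univ_pi fun _ =>
    isCompact_closedBall (0 : 𝕜) 1).of_isClosed_subset (isClosed_unitary (R := Matrix m m 𝕜))
      fun _ hU i _ j _ => mem_closedBall_zero_iff.2 (entry_norm_bound_of_unitary hU i j)

theorem continuous_eigenvalues :
    Continuous fun A : {A : Matrix m m 𝕜 // A.IsHermitian} => A.2.eigenvalues := by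
  have : CompactSpace (unitaryGroup m 𝕜) := isCompact_iff_compactSpace.1 isCompact_unitaryGroup
  let e := Fintype.equivOfCardEq (Fintype.card_fin (Fintype.card m))
  let conj (p : unitaryGroup m 𝕜 × {A : Matrix m m 𝕜 // A.IsHermitian}) : Matrix m m 𝕜 :=
    star (p.1 : Matrix m m 𝕜) * p.2 * p.1
  let d (p : unitaryGroup m 𝕜 × {A : Matrix m m 𝕜 // A.IsHermitian}) : m → ℝ :=
    fun i => RCLike.re (conj p i i)
  have hconj : Continuous conj := by fun_prop
  have hd : Continuous d := by fun_prop
  refine continuous_iff_isClosed.2 fun C hC => ?_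
  -- Without sortedness, `d p` would only be the eigenvalue vector up to a permutation.
  suffices h : (fun A : {A : Matrix m m 𝕜 // A.IsHermitian} => A.2.eigenvalues) ⁻¹' C =
      Prod.snd '' {p | conj p = diagonal (RCLike.ofReal ∘ d p) ∧ Antitone (d p ∘ e) ∧ d p ∈ C} by
    rw [h]
    have hdiag := isClosed_eq hconj (g := fun p => diagonal (RCLike.ofReal ∘ d p)) (by fun_prop)
    have hsorted := isClosed_antitone.preimage (f := fun p => d p ∘ e) (by fun_prop)
    exact isClosedMap_snd_of_compactSpace _ (hdiag.inter (hsorted.inter (hC.preimage hd)))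
  ext A
  constructor
  · intro hA
    have hdiag : conj (A.2.eigenvectorUnitary, A) = diagonal (RCLike.ofReal ∘ A.2.eigenvalues) := by
      rw [← A.2.conjStarAlgAut_star_eigenvectorUnitary, Unitary.conjStarAlgAut_star_apply]
    have hd_eq : d (A.2.eigenvectorUnitary, A) = A.2.eigenvalues := by
      ext i
      simp [d, hdiag]
    exact ⟨(A.2.eigenvectorUnitary, A),
      ⟨hd_eq ▸ hdiag, hd_eq ▸ antitone_eigenvalues_comp_equivOfCardEq A.2, hd_eq ▸ hA⟩, rfl⟩
  · rintro ⟨p, ⟨hp, hanti, hpC⟩, rfl⟩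
    rwa [Set.mem_preimage, eigenvalues_eq_of_antitone p.2.2 p.1.2 hanti hp]

theorem tendsto_eigenvalues {ι : Type*} {l : Filter ι} {A : ι → Matrix m m 𝕜} {B : Matrix m m 𝕜}
    (hA : ∀ i, (A i).IsHermitian) (hB : B.IsHermitian) (hAB : Tendsto A l (𝓝 B)) :
    Tendsto (fun i => (hA i).eigenvalues) l (𝓝 hB.eigenvalues) := by
  let A' (i : ι) : {A : Matrix m m 𝕜 // A.IsHermitian} := ⟨A i, hA i⟩
  have hA' : Tendsto A' l (𝓝 ⟨B, hB⟩) := tendsto_subtype_rng.2 hAB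
  simpa only [Function.comp_def] using continuous_eigenvalues.continuousAt.tendsto.comp hA'

theorem isHermitian_cfc (f : ℝ → ℝ) (A : Matrix m m 𝕜) : (cfc f A).IsHermitian :=
  cfc_predicate f A

theorem cfc_cfc_of_isHermitian (hA : A.IsHermitian) (f g : ℝ → ℝ) :
    cfc g (cfc f A) = cfc (g ∘ f) A :=
  (cfc_comp g f A hA ((A.finite_real_spectrum.image f).continuousOn g)
    (A.finite_real_spectrum.continuousOn f)).symm

end Hermitian

section Logarithm

variable {n : ℕ} {A B X Y : Matrix (Fin n) (Fin n) ℂ}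

theorem mlog_eq_cfc (hA : A.IsHermitian) : mlog A = cfc Real.log A :=
  (dif_pos hA).trans (hA.cfc_eq Real.log).symm

theorem matSqrt_eq_cfc (hA : A.PosSemidef) : matSqrt A = cfc Real.sqrt A :=
  (dif_pos hA).trans (hA.1.cfc_eq Real.sqrt).symm

theorem isHermitian_matSqrt (hA : A.PosSemidef) : (matSqrt A).IsHermitian :=
  matSqrt_eq_cfc hA ▸ isHermitian_cfc Real.sqrt A

theorem matSqrt_mul_self (hA : A.PosSemidef) : matSqrt A * matSqrt A = A := by
  have hcont {f : ℝ → ℝ} : ContinuousOn f (spectrum ℝ A) := A.finite_real_spectrum.continuousOn f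
  have hsq : (spectrum ℝ A).EqOn (fun x => √x * √x) id := by
    rw [hA.1.spectrum_real_eq_range_eigenvalues]
    rintro _ ⟨i, rfl⟩
    exact Real.mul_self_sqrt (hA.eigenvalues_nonneg i)
  rw [matSqrt_eq_cfc hA, ← cfc_mul Real.sqrt Real.sqrt A hcont hcont, cfc_congr hsq]
  exact cfc_id ℝ A hA.1

theorem isUnit_matSqrt (hA : A.PosDef) : IsUnit (matSqrt A) := by
  have := hA.isUnit
  rw [← matSqrt_mul_self hA.posSemidef] at this
  exact isUnit_of_mul_isUnit_left this

theorem posDef_inv_matSqrt_conj (hX : X.PosDef) (hY : Y.PosDef) :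
    ((matSqrt X)⁻¹ * Y * (matSqrt X)⁻¹).PosDef := by
  have hS : (matSqrt X)⁻¹.IsHermitian := (isHermitian_matSqrt hX.posSemidef).inv
  have := ((isUnit_nonsing_inv_iff.2 (isUnit_matSqrt hX)).posDef_star_left_conjugate_iff).2 hY
  rwa [star_eq_conjTranspose, hS.eq] at this

theorem isHermitian_inv_matSqrt_conj (hX : X.PosSemidef) (hA : A.IsHermitian) :
    ((matSqrt X)⁻¹ * A * (matSqrt X)⁻¹).IsHermitian := by
  have := isHermitian_mul_mul_conjTranspose (matSqrt X)⁻¹ hA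
  rwa [(isHermitian_matSqrt hX).inv.eq] at this

theorem inv_matSqrt_conj_self (hX : X.PosDef) : (matSqrt X)⁻¹ * X * (matSqrt X)⁻¹ = 1 := by
  have hS := (isUnit_iff_isUnit_det _).1 (isUnit_matSqrt hX)
  nth_rw 2 [← matSqrt_mul_self hX.posSemidef]
  rw [nonsing_inv_mul_cancel_left _ _ hS, mul_nonsing_inv _ hS]

theorem inv_matSqrt_conj_eq_one_add_smul_slope {γ : ℝ → Matrix (Fin n) (Fin n) ℂ} {t : ℝ}
    (ht : (γ t).PosDef) (s : ℝ) :
    (matSqrt (γ t))⁻¹ * γ s * (matSqrt (γ t))⁻¹ =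
      1 + (s - t) • ((matSqrt (γ t))⁻¹ * slope γ t s * (matSqrt (γ t))⁻¹) := by
  rw [← smul_mul_assoc, ← mul_smul_comm, sub_smul_slope, vsub_eq_sub, mul_sub, sub_mul,
    inv_matSqrt_conj_self ht, add_sub_cancel]

theorem mlog_inv (hA : A.PosDef) : mlog A⁻¹ = -mlog A := by
  have hinv : A⁻¹ = cfc (·⁻¹ : ℝ → ℝ) A := by
    rw [cfc_ringInverse_id A hA.isUnit hA.1.isSelfAdjoint, nonsing_inv_eq_ringInverse]
  have hlog : Real.log ∘ (·⁻¹) = fun x => -Real.log x := funext Real.log_inv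
  rw [mlog_eq_cfc hA.1.inv, mlog_eq_cfc hA.1, hinv, cfc_cfc_of_isHermitian hA.1, hlog, cfc_neg]

theorem charpoly_inv_matSqrt_conj (hX : X.PosDef) (hY : Y.PosDef) :
    ((matSqrt X)⁻¹ * Y * (matSqrt X)⁻¹).charpoly =
      ((matSqrt Y)⁻¹ * X * (matSqrt Y)⁻¹)⁻¹.charpoly := by
  have hS := (isUnit_iff_isUnit_det _).1 (isUnit_matSqrt hY)
  calc ((matSqrt X)⁻¹ * Y * (matSqrt X)⁻¹).charpoly
      = (X⁻¹ * Y).charpoly := by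
        rw [charpoly_mul_comm, ← mul_assoc, ← Matrix.mul_inv_rev, matSqrt_mul_self hX.posSemidef]
    _ = (matSqrt Y * (X⁻¹ * matSqrt Y)).charpoly := by
        rw [charpoly_mul_comm (matSqrt Y), mul_assoc, matSqrt_mul_self hY.posSemidef]
    _ = ((matSqrt Y)⁻¹ * X * (matSqrt Y)⁻¹)⁻¹.charpoly := by
        rw [Matrix.mul_inv_rev, Matrix.mul_inv_rev, nonsing_inv_nonsing_inv _ hS]

section PermutationInvariant

variable {v : (Fin n → ℝ) → ℝ}

theorem vnorm_of_isHermitian (hA : A.IsHermitian) : vnorm v A = v hA.eigenvalues := dif_pos hA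

theorem vnorm_cfc (hv : ∀ (σ : Equiv.Perm (Fin n)) x, v (x ∘ σ) = v x) (hA : A.IsHermitian)
    (f : ℝ → ℝ) : vnorm v (cfc f A) = v (f ∘ hA.eigenvalues) := by
  have hf := isHermitian_cfc f A
  obtain ⟨σ, hσ⟩ := exists_perm_eigenvalues_eq_comp hf (hA.charpoly_cfc_eq f)
  rw [vnorm_of_isHermitian hf, hσ]
  exact hv σ _

theorem vnorm_mlog (hv : ∀ (σ : Equiv.Perm (Fin n)) x, v (x ∘ σ) = v x) (hA : A.IsHermitian) :
    vnorm v (mlog A) = v (Real.log ∘ hA.eigenvalues) := by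
  rw [mlog_eq_cfc hA, vnorm_cfc hv hA]

theorem vnorm_mlog_one_add_smul (hv : ∀ (σ : Equiv.Perm (Fin n)) x, v (x ∘ σ) = v x)
    (hA : A.IsHermitian) (h : ℝ) :
    vnorm v (mlog (1 + h • A)) = v (fun i => Real.log (1 + h * hA.eigenvalues i)) := by
  have hcfc : 1 + h • A = cfc (fun x : ℝ => 1 + h * x) A := by
    rw [cfc_const_add (1 : ℝ) (h * ·) A (by fun_prop) hA.isSelfAdjoint,
      cfc_const_mul_id h A hA.isSelfAdjoint, map_one]
  have hf := isHermitian_cfc (fun x : ℝ => 1 + h * x) A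
  rw [hcfc, mlog_eq_cfc hf, cfc_cfc_of_isHermitian hA, vnorm_cfc hv hA]
  rfl

end PermutationInvariant

section Seminorm

variable {p : Seminorm ℝ (Fin n → ℝ)}

theorem vnorm_neg (hp : ∀ (σ : Equiv.Perm (Fin n)) x, p (x ∘ σ) = p x) (hA : A.IsHermitian) :
    vnorm p (-A) = vnorm p A := by
  have hneg : -A = cfc (fun x : ℝ => -x) A := by rw [cfc_neg_id A hA.isSelfAdjoint]
  rw [hneg, vnorm_cfc hp hA, vnorm_of_isHermitian hA, ← map_neg_eq_map p]
  congr 1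
  ext i
  simp

theorem dv_comm (hp : ∀ (σ : Equiv.Perm (Fin n)) x, p (x ∘ σ) = p x) (hX : X.PosDef)
    (hY : Y.PosDef) : dv p X Y = dv p Y X := by
  have hXY := posDef_inv_matSqrt_conj hX hY
  have hYX := posDef_inv_matSqrt_conj hY hX
  have heig : hXY.1.eigenvalues = hYX.1.inv.eigenvalues :=
    (IsHermitian.eigenvalues_eq_eigenvalues_iff _ _).2 (charpoly_inv_matSqrt_conj hX hY)
  have hlog : (mlog ((matSqrt Y)⁻¹ * X * (matSqrt Y)⁻¹)).IsHermitian :=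
    mlog_eq_cfc hYX.1 ▸ isHermitian_cfc Real.log _
  rw [dv, dv, vnorm_mlog hp hXY.1, heig, ← vnorm_mlog hp hYX.1.inv, mlog_inv hYX, vnorm_neg hp hlog]

theorem tendsto_vnorm_mlog_one_add_smul (hp : ∀ (σ : Equiv.Perm (Fin n)) x, p (x ∘ σ) = p x)
    {ι : Type*} {l : Filter ι} {h : ι → ℝ} {A : ι → Matrix (Fin n) (Fin n) ℂ}
    (hh : Tendsto h l (𝓝 0)) (hne : ∀ᶠ i in l, h i ≠ 0) (hA : ∀ᶠ i in l, (A i).IsHermitian)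
    (hAB : Tendsto A l (𝓝 B)) (hB : B.IsHermitian) :
    Tendsto (fun i => vnorm p (mlog (1 + h i • A i)) / |h i|) l (𝓝 (vnorm p B)) := by
  have hcont : Continuous p := p.convexOn.locallyLipschitz.continuous
  let coe : {i // (A i).IsHermitian} → ι := Subtype.val
  have hcoe : Tendsto coe (comap coe l) l := tendsto_comap
  have heig : Tendsto (fun i => i.2.eigenvalues) (comap coe l) (𝓝 hB.eigenvalues) :=
    tendsto_eigenvalues (fun i => i.2) hB (hAB.comp hcoe)
  have hlog : Tendsto (fun i k => (h (coe i))⁻¹ * Real.log (1 + h (coe i) * i.2.eigenvalues k))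
      (comap coe l) (𝓝 hB.eigenvalues) :=
    tendsto_pi_nhds.2 fun k => by
      simpa using tendsto_inv_mul_sub_of_hasDerivAt (Real.hasDerivAt_log one_ne_zero)
        (hh.comp hcoe) (hcoe.eventually hne) (tendsto_pi_nhds.1 heig k)
  have hrange : Set.range coe ∈ l := by simpa [coe, Filter.Eventually] using hA
  rw [vnorm_of_isHermitian hB, ← tendsto_comap'_iff hrange]
  refine ((hcont.tendsto _).comp hlog).congr fun i => ?_
  rw [Function.comp_apply, Function.comp_apply, vnorm_mlog_one_add_smul hp i.2, div_eq_inv_mul,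
    ← abs_inv, ← Real.norm_eq_abs, ← map_smul_eq_mul]
  rfl

end Seminorm

end Logarithm

theorem metric_derivative_dv_general {n : ℕ} {p : Seminorm ℝ (Fin n → ℝ)}
    (hp : ∀ (σ : Equiv.Perm (Fin n)) x, p (x ∘ σ) = p x) {t₀ : ℝ}
    {γ : ℝ → Matrix (Fin n) (Fin n) ℂ} (hγ : ∀ᶠ t in 𝓝 t₀, (γ t).PosDef)
    {D : Matrix (Fin n) (Fin n) ℂ} (hD : HasDerivAt γ D t₀) :
    Tendsto (fun s => dv p (γ s) (γ t₀) / |s - t₀|) (𝓝[≠] t₀)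
      (𝓝 (vnorm p ((matSqrt (γ t₀))⁻¹ * D * (matSqrt (γ t₀))⁻¹))) := by
  have hpos : (γ t₀).PosDef := hγ.self_of_nhds
  have hγ' : ∀ᶠ s in 𝓝[≠] t₀, (γ s).PosDef := hγ.filter_mono nhdsWithin_le_nhds
  have hD_herm : D.IsHermitian := isHermitian_of_hasDerivAt (hγ.mono fun _ ht => ht.1) hD
  have hsub : Tendsto (fun s => s - t₀) (𝓝[≠] t₀) (𝓝 0) :=
    (tendsto_sub_nhds_zero_iff.2 tendsto_id).mono_left nhdsWithin_le_nhds
  have hne : ∀ᶠ s in 𝓝[≠] t₀, s - t₀ ≠ 0 :=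
    eventually_mem_nhdsWithin.mono fun s hs => sub_ne_zero.2 hs
  have hherm : ∀ᶠ s in 𝓝[≠] t₀,
      ((matSqrt (γ t₀))⁻¹ * slope γ t₀ s * (matSqrt (γ t₀))⁻¹).IsHermitian :=
    hγ'.mono fun s hs =>
      isHermitian_inv_matSqrt_conj hpos.posSemidef (isHermitian_slope hs.1 hpos.1)
  have hslope : Tendsto (fun s => (matSqrt (γ t₀))⁻¹ * slope γ t₀ s * (matSqrt (γ t₀))⁻¹)
      (𝓝[≠] t₀) (𝓝 ((matSqrt (γ t₀))⁻¹ * D * (matSqrt (γ t₀))⁻¹)) :=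
    have hcont : Continuous fun M => (matSqrt (γ t₀))⁻¹ * M * (matSqrt (γ t₀))⁻¹ := by fun_prop
    (hcont.tendsto D).comp hD.tendsto_slope
  refine (tendsto_vnorm_mlog_one_add_smul hp hsub hne hherm hslope
    (isHermitian_inv_matSqrt_conj hpos.posSemidef hD_herm)).congr' (hγ'.mono fun s hs => ?_)
  beta_reduce
  rw [dv_comm hp hs hpos, dv, inv_matSqrt_conj_eq_one_add_smul_slope hpos]

/-- The metric derivative w.r.t. `d_v` of a differentiable curve `γ` in `P_n` at `t₀`
exists and equals `‖γ(t₀)^{-1/2} γ'(t₀) γ(t₀)^{-1/2}‖_v`. -/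
theorem metric_derivative_dv {n : ℕ} (v : (Fin n → ℝ) → ℝ)
    (hv_eq0 : ∀ x, v x = 0 ↔ x = 0)
    (hv_smul : ∀ (c : ℝ) (x : Fin n → ℝ), v (c • x) = |c| * v x)
    (hv_add : ∀ x y, v (x + y) ≤ v x + v y)
    (hv_perm : ∀ (σ : Equiv.Perm (Fin n)) (x : Fin n → ℝ), v (x ∘ σ) = v x)
    (a b t₀ : ℝ) (ht₀ : t₀ ∈ Set.Ioo a b)
    (γ : ℝ → Matrix (Fin n) (Fin n) ℂ)
    (hγ : ∀ t ∈ Set.Ioo a b, (γ t).PosDef)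
    (D : Matrix (Fin n) (Fin n) ℂ) (hD : HasDerivAt γ D t₀) :
    Tendsto (fun s => dv v (γ s) (γ t₀) / |s - t₀|) (𝓝[≠] t₀)
      (𝓝 (vnorm v ((matSqrt (γ t₀))⁻¹ * D * (matSqrt (γ t₀))⁻¹))) :=
  metric_derivative_dv_general (p := .of v hv_add fun c x => by rw [hv_smul, Real.norm_eq_abs])
    hv_perm (mem_of_superset (Ioo_mem_nhds ht₀.1 ht₀.2) hγ) hD
end
end

section
/- Let v be a norm on ℝ^n invariant under coordinate permutations with dual norm v*, and let f : P_n → ℝ be a differentiable function that is geodesically convex, i.e., t ↦ f(X^{1/2} e^{tS} X^{1/2}) is convex on ℝ for every X ∈ P_n and every Hermitian S. For X ∈ P_n let ∇f(X) denote the Hermitian matrix representing the differential of f at X, so that the derivative of f at X in direction H equals tr(∇f(X) H) for every Hermitian H. Then the global slope of f at X with respect to d_v satisfies sup_{Y ∈ P_n, Y ≠ X} max{0, f(X) − f(Y)} / d_v(X,Y) = ‖X^{1/2} ∇f(X) X^{1/2}‖_{v*}. -/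
noncomputable section
open scoped Classical
open Matrix
open scoped ComplexOrder

/-!
The geodesics of `P_n` leaving `X` are `t ↦ Q e^{tS} Q` with `Q = X^{1/2}`, and the point reached
at `t = 1` is at distance `‖S‖_v`. If the derivative of `f` along such a geodesic at `t = 0` is
`tr (L S)` with `L = Q ∇f(X) Q`, then convexity gives `f X - f Y ≤ -tr (L S)`, and everything
reduces to the duality of `‖·‖_v` and `‖·‖_{v*}` under the trace pairing: the slope is at most
`‖L‖_{v*}`, and moving along `-S` for small `t`, with `S` a unit direction attaining `‖L‖_{v*}`,
shows that it is no smaller.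

Duality: in eigenbases of `H` and `S` the trace of `H S` is `λ(H) ⬝ M λ(S)` with `M` unistochastic,
and by Birkhoff's theorem `v (M x) ≤ v x`.

Derivative along geodesics: the gradient gives derivatives of `f` along straight lines only. The
geodesic and the line `X + t Q S Q` both lie in the flat `s ↦ A diag(e^s) Aᴴ`, where `A = Q U` and
`U` diagonalizes `S`. On the flat `f` is a convex, hence locally Lipschitz, function of `s`, and the
two curves are tangent there, so `f` has the same derivative along both.
-/

section Diagonal

variable {ι : Type*} [DecidableEq ι]

lemma isHermitian_diagonal_ofReal (s : ι → ℝ) : (diagonal fun i ↦ (s i : ℂ)).IsHermitian :=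
  isHermitian_diagonal_of_self_adjoint _ (by ext; simp)

lemma diagonal_ofReal_smul (c : ℝ) (s : ι → ℝ) :
    diagonal (fun i ↦ ((c • s) i : ℂ)) = c • diagonal fun i ↦ (s i : ℂ) := by
  rw [← diagonal_smul]
  congr 1
  ext
  simp

end Diagonal

section Vectors

variable {ι : Type*} [Fintype ι]

lemma exists_equiv_comp_eq_of_map_univ_eq {α β γ : Type*} [Fintype α] [Fintype β]
    {a : α → γ} {b : β → γ}
    (h : Finset.univ.val.map a = Finset.univ.val.map b) : ∃ e : α ≃ β, b ∘ e = a := by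
  have hcard (c : γ) : Fintype.card {i // a i = c} = Fintype.card {j // b j = c} := by
    simpa [Multiset.count_map, Fintype.card_subtype, Finset.card_def, eq_comm] using
      congrArg (Multiset.count c) h
  exact ⟨Equiv.ofFiberEquiv fun c ↦ Fintype.equivOfCardEq (hcard c),
    funext (Equiv.ofFiberEquiv_map _)⟩

/-- `q` is the norm dual to `p` under the standard pairing on `ι → ℝ`; the defining supremum is
required to be attained. -/
def IsDualNorm (p q : (ι → ℝ) → ℝ) : Prop :=
  ∀ x, IsGreatest {r : ℝ | ∃ y : ι → ℝ, p y ≤ 1 ∧ r = ∑ i, x i * y i} (q x)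

lemma IsDualNorm.nonneg {p : Seminorm ℝ (ι → ℝ)} {q : (ι → ℝ) → ℝ} (hq : IsDualNorm p q)
    (x : ι → ℝ) : 0 ≤ q x :=
  (hq x).2 ⟨0, by simp, by simp⟩

lemma IsDualNorm.sum_mul_le {p : Seminorm ℝ (ι → ℝ)} {q : (ι → ℝ) → ℝ} (hq : IsDualNorm p q)
    (x y : ι → ℝ) : ∑ i, x i * y i ≤ q x * p y := by
  refine le_mul_of_forall_lt₀ fun a ha b hb ↦ ?_
  have hb0 : 0 < b := (apply_nonneg p y).trans_lt hb
  have hle : p (b⁻¹ • y) ≤ 1 := by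
    rw [map_smul_eq_mul, Real.norm_of_nonneg (inv_nonneg.2 hb0.le), inv_mul_le_iff₀ hb0, mul_one]
    exact hb.le
  have hpair := (hq x).2 ⟨_, hle, rfl⟩
  simp only [Pi.smul_apply, smul_eq_mul, mul_left_comm _ b⁻¹, ← Finset.mul_sum] at hpair
  calc ∑ i, x i * y i = (b⁻¹ * ∑ i, x i * y i) * b := by field_simp
    _ ≤ q x * b := by gcongr
    _ ≤ a * b := by gcongr

/-- Invariance of a function on `ι → ℝ` under permutations of the coordinates. -/
def PermInvariant (φ : (ι → ℝ) → ℝ) : Prop :=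
  ∀ (σ : Equiv.Perm ι) (x : ι → ℝ), φ (x ∘ σ) = φ x

variable [DecidableEq ι]

lemma apply_mulVec_le_of_mem_doublyStochastic {φ : (ι → ℝ) → ℝ} (hφ : ConvexOn ℝ Set.univ φ)
    (hφ_perm : PermInvariant φ) {M : Matrix ι ι ℝ} (hM : M ∈ doublyStochastic ℝ ι) (x : ι → ℝ) :
    φ (M *ᵥ x) ≤ φ x := by
  rw [← SetLike.mem_coe, doublyStochastic_eq_convexHull_permMatrix] at hM
  obtain ⟨_, ⟨σ, rfl⟩, hσ⟩ :=
    (hφ.comp_linearMap ((Matrix.mulVecBilin ℝ ℝ).flip x)).exists_ge_of_mem_convexHull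
      (Set.subset_univ _) hM
  simpa [Matrix.permMatrix_mulVec, hφ_perm _ x] using hσ

end Vectors

section SpectralMatrix

variable {ι : Type*} [Fintype ι] [DecidableEq ι]

/-- The unistochastic matrix `(|U i j| ^ 2)` of a unitary matrix `U`. -/
def unistochastic (U : unitaryGroup ι ℂ) : Matrix ι ι ℝ :=
  of fun i j ↦ ‖U i j‖ ^ 2

lemma unistochastic_one : unistochastic (1 : unitaryGroup ι ℂ) = 1 := by
  ext i j
  by_cases hij : i = j <;> simp [unistochastic, one_apply, hij]

lemma unistochastic_mem_doublyStochastic (U : unitaryGroup ι ℂ) :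
    unistochastic U ∈ doublyStochastic ℝ ι := by
  rw [mem_doublyStochastic_iff_sum]
  refine ⟨fun i j ↦ sq_nonneg _, fun i ↦ ?_, fun j ↦ ?_⟩
  · have hrow := congrFun₂ (mem_unitaryGroup_iff.1 U.2) i i
    simp only [mul_apply, star_apply, RCLike.star_def, Complex.mul_conj', one_apply_eq] at hrow
    simp only [unistochastic, of_apply]
    exact_mod_cast hrow
  · have hcol := congrFun₂ (mem_unitaryGroup_iff'.1 U.2) j j
    simp only [mul_apply, star_apply, RCLike.star_def, Complex.conj_mul', one_apply_eq] at hcol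
    simp only [unistochastic, of_apply]
    exact_mod_cast hcol

/-- The Hermitian matrix whose eigenvectors are the columns of the unitary matrix `U`, with
eigenvalues `s`. -/
def spectralMatrix (U : unitaryGroup ι ℂ) (s : ι → ℝ) : Matrix ι ι ℂ :=
  U * diagonal (fun i ↦ (s i : ℂ)) * star (U : Matrix ι ι ℂ)

lemma isHermitian_spectralMatrix (U : unitaryGroup ι ℂ) (s : ι → ℝ) :
    (spectralMatrix U s).IsHermitian :=
  isHermitian_mul_mul_conjTranspose _ (isHermitian_diagonal_ofReal s)

lemma spectralMatrix_eigenvalues {H : Matrix ι ι ℂ} (hH : H.IsHermitian) :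
    spectralMatrix hH.eigenvectorUnitary hH.eigenvalues = H := by
  simpa [spectralMatrix, Unitary.conjStarAlgAut_apply, Function.comp_def]
    using hH.spectral_theorem.symm

lemma smul_spectralMatrix (c : ℝ) (U : unitaryGroup ι ℂ) (s : ι → ℝ) :
    c • spectralMatrix U s = spectralMatrix U (c • s) := by
  rw [spectralMatrix, spectralMatrix, diagonal_ofReal_smul, mul_smul_comm, smul_mul_assoc]

lemma re_spectralMatrix_apply_self (U : unitaryGroup ι ℂ) (s : ι → ℝ) (i : ι) :
    (spectralMatrix U s i i).re = (unistochastic U *ᵥ s) i := by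
  rw [spectralMatrix, mul_apply, Complex.re_sum]
  refine Finset.sum_congr rfl fun j _ ↦ ?_
  rw [mul_diagonal, star_apply, RCLike.star_def, mul_right_comm, Complex.mul_conj',
    ← Complex.ofReal_pow, ← Complex.ofReal_mul, Complex.ofReal_re]
  rfl

lemma spectralMatrix_mul_unitary (U V : unitaryGroup ι ℂ) (s : ι → ℝ) :
    spectralMatrix (U * V) s = U * spectralMatrix V s * star (U : Matrix ι ι ℂ) := by
  simp only [spectralMatrix, UnitaryGroup.mul_val, star_mul, mul_assoc]

lemma re_trace_spectralMatrix_mul (U V : unitaryGroup ι ℂ) (s t : ι → ℝ) :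
    (trace (spectralMatrix U s * spectralMatrix V t)).re =
      s ⬝ᵥ unistochastic (U⁻¹ * V) *ᵥ t := by
  set W := U⁻¹ * V
  have htrace : trace (spectralMatrix U s * spectralMatrix V t) =
      trace (diagonal (fun i ↦ (s i : ℂ)) * spectralMatrix W t) := by
    rw [show V = U * W by simp [W], spectralMatrix_mul_unitary, spectralMatrix, trace_mul_comm]
    simp only [mul_assoc]
    rw [← mul_assoc (star (U : Matrix ι ι ℂ)), UnitaryGroup.star_mul_self, one_mul,
      trace_mul_comm]
    simp only [mul_assoc, UnitaryGroup.star_mul_self, mul_one]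
    rw [trace_mul_comm]
  rw [htrace, trace, Complex.re_sum]
  refine Finset.sum_congr rfl fun i _ ↦ ?_
  rw [diag_apply, diagonal_mul, Complex.re_ofReal_mul, re_spectralMatrix_apply_self]

lemma spectralMatrix_mul_spectralMatrix (U : unitaryGroup ι ℂ) (s t : ι → ℝ) :
    spectralMatrix U s * spectralMatrix U t = spectralMatrix U (s * t) := by
  simp only [spectralMatrix, mul_assoc]
  rw [← mul_assoc (star (U : Matrix ι ι ℂ)), UnitaryGroup.star_mul_self, one_mul,
    ← mul_assoc (diagonal _) (diagonal _), diagonal_mul_diagonal]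
  simp

lemma exp_spectralMatrix (U : unitaryGroup ι ℂ) (s : ι → ℝ) :
    NormedSpace.exp (spectralMatrix U s) = spectralMatrix U fun i ↦ Real.exp (s i) := by
  have hinv : star (U : Matrix ι ι ℂ) = (U : Matrix ι ι ℂ)⁻¹ :=
    (inv_eq_left_inv (UnitaryGroup.star_mul_self U)).symm
  rw [spectralMatrix, spectralMatrix, hinv, exp_conj _ _ (Unitary.isUnit_coe (U := U)),
    exp_diagonal]
  congr 3
  ext i
  rw [Pi.coe_exp, ← Complex.exp_eq_exp_ℂ, Complex.ofReal_exp]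

lemma exists_perm_eigenvalues_spectralMatrix (U : unitaryGroup ι ℂ) (s : ι → ℝ) :
    ∃ σ : Equiv.Perm ι, (isHermitian_spectralMatrix U s).eigenvalues = s ∘ σ := by
  have hchar : (spectralMatrix U s).charpoly = (diagonal fun i ↦ (s i : ℂ)).charpoly := by
    rw [spectralMatrix, charpoly_mul_comm, ← mul_assoc, UnitaryGroup.star_mul_self, one_mul]
  have hroots : Finset.univ.val.map
      (fun i ↦ ((isHermitian_spectralMatrix U s).eigenvalues i : ℂ)) =
        Finset.univ.val.map fun i ↦ (s i : ℂ) := by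
    refine (isHermitian_spectralMatrix U s).roots_charpoly_eq_eigenvalues.symm.trans ?_
    rw [hchar, charpoly_diagonal, Polynomial.roots_prod]
    · simp
    · simp [Finset.prod_ne_zero_iff, Polynomial.X_sub_C_ne_zero]
  obtain ⟨σ, hσ⟩ := exists_equiv_comp_eq_of_map_univ_eq hroots
  exact ⟨σ, funext fun i ↦ Complex.ofReal_injective (congrFun hσ i).symm⟩

end SpectralMatrix

section VNorm

variable {n : ℕ} {H S : Matrix (Fin n) (Fin n) ℂ}

lemma vnorm_of_isHermitian_s11 {v : (Fin n → ℝ) → ℝ} (hH : H.IsHermitian) :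
    vnorm v H = v hH.eigenvalues :=
  dif_pos hH

lemma vnorm_spectralMatrix {v : (Fin n → ℝ) → ℝ} (hv_perm : PermInvariant v)
    (U : unitaryGroup (Fin n) ℂ) (s : Fin n → ℝ) : vnorm v (spectralMatrix U s) = v s := by
  obtain ⟨σ, hσ⟩ := exists_perm_eigenvalues_spectralMatrix U s
  rw [vnorm_of_isHermitian_s11 (isHermitian_spectralMatrix U s), ← hv_perm σ s, ← hσ]

variable {p : Seminorm ℝ (Fin n → ℝ)} {q : (Fin n → ℝ) → ℝ}

lemma vnorm_nonneg (H : Matrix (Fin n) (Fin n) ℂ) : 0 ≤ vnorm p H := by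
  rw [vnorm]
  split_ifs
  exacts [apply_nonneg p _, le_rfl]

lemma vnorm_smul (hp_perm : PermInvariant p)
    (hS : S.IsHermitian) (c : ℝ) : vnorm p (c • S) = |c| * vnorm p S := by
  rw [← spectralMatrix_eigenvalues hS, smul_spectralMatrix, vnorm_spectralMatrix hp_perm,
    vnorm_spectralMatrix hp_perm, map_smul_eq_mul, Real.norm_eq_abs]

lemma IsDualNorm.re_trace_mul_le (hq : IsDualNorm p q) (hp_perm : PermInvariant p)
    (hH : H.IsHermitian) (hS : S.IsHermitian) :
    (trace (H * S)).re ≤ vnorm q H * vnorm p S := by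
  set U := hH.eigenvectorUnitary
  set V := hS.eigenvectorUnitary
  calc (trace (H * S)).re
      = hH.eigenvalues ⬝ᵥ unistochastic (U⁻¹ * V) *ᵥ hS.eigenvalues := by
        rw [← re_trace_spectralMatrix_mul, spectralMatrix_eigenvalues, spectralMatrix_eigenvalues]
    _ ≤ q hH.eigenvalues * p (unistochastic (U⁻¹ * V) *ᵥ hS.eigenvalues) := hq.sum_mul_le _ _
    _ ≤ q hH.eigenvalues * p hS.eigenvalues := by
        gcongr
        · exact hq.nonneg _
        · exact apply_mulVec_le_of_mem_doublyStochastic p.convexOn hp_perm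
            (unistochastic_mem_doublyStochastic _) _
    _ = vnorm q H * vnorm p S := by rw [vnorm_of_isHermitian_s11 hH, vnorm_of_isHermitian_s11 hS]

lemma IsDualNorm.exists_re_trace_mul_eq (hq : IsDualNorm p q) (hp_perm : PermInvariant p)
    (hH : H.IsHermitian) :
    ∃ S : Matrix (Fin n) (Fin n) ℂ,
      S.IsHermitian ∧ vnorm p S ≤ 1 ∧ (trace (H * S)).re = vnorm q H := by
  obtain ⟨y, hy, hqy⟩ := (hq hH.eigenvalues).1
  refine ⟨spectralMatrix hH.eigenvectorUnitary y, isHermitian_spectralMatrix _ _, ?_, ?_⟩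
  · rwa [vnorm_spectralMatrix hp_perm]
  · have htrace := re_trace_spectralMatrix_mul hH.eigenvectorUnitary hH.eigenvectorUnitary
      hH.eigenvalues y
    rw [spectralMatrix_eigenvalues] at htrace
    rw [htrace, inv_mul_cancel, unistochastic_one, one_mulVec,
      vnorm_of_isHermitian_s11 hH, hqy, dotProduct]

end VNorm

section SquareRootLogarithm

variable {n : ℕ} {X S : Matrix (Fin n) (Fin n) ℂ}

lemma matSqrt_eq_spectralMatrix (hX : X.PosSemidef) :
    matSqrt X = spectralMatrix hX.1.eigenvectorUnitary fun i ↦ √(hX.1.eigenvalues i) :=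
  dif_pos hX

lemma mlog_eq_spectralMatrix (hX : X.IsHermitian) :
    mlog X = spectralMatrix hX.eigenvectorUnitary fun i ↦ Real.log (hX.eigenvalues i) :=
  dif_pos hX

lemma isHermitian_matSqrt_s11 (X : Matrix (Fin n) (Fin n) ℂ) : (matSqrt X).IsHermitian := by
  by_cases hX : X.PosSemidef
  · rw [matSqrt_eq_spectralMatrix hX]
    exact isHermitian_spectralMatrix _ _
  · rw [matSqrt, dif_neg hX]
    exact isHermitian_zero

lemma isHermitian_mlog (X : Matrix (Fin n) (Fin n) ℂ) : (mlog X).IsHermitian := by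
  by_cases hX : X.IsHermitian
  · rw [mlog_eq_spectralMatrix hX]
    exact isHermitian_spectralMatrix _ _
  · rw [mlog, dif_neg hX]
    exact isHermitian_zero

lemma matSqrt_mul_matSqrt (hX : X.PosSemidef) : matSqrt X * matSqrt X = X := by
  rw [matSqrt_eq_spectralMatrix hX, spectralMatrix_mul_spectralMatrix]
  conv_rhs => rw [← spectralMatrix_eigenvalues hX.1]
  congr 1
  exact funext fun i ↦ Real.mul_self_sqrt (hX.eigenvalues_nonneg i)

lemma isUnit_matSqrt_s11 (hX : X.PosDef) : IsUnit (matSqrt X) := by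
  have hunit := hX.isUnit
  rw [← matSqrt_mul_matSqrt hX.posSemidef] at hunit
  exact isUnit_of_mul_isUnit_left hunit

lemma exp_mlog (hX : X.PosDef) : NormedSpace.exp (mlog X) = X := by
  rw [mlog_eq_spectralMatrix hX.1, exp_spectralMatrix]
  conv_rhs => rw [← spectralMatrix_eigenvalues hX.1]
  congr 1
  exact funext fun i ↦ Real.exp_log (hX.eigenvalues_pos i)

lemma vnorm_mlog_exp {v : (Fin n → ℝ) → ℝ} (hv_perm : PermInvariant v)
    (hS : S.IsHermitian) : vnorm v (mlog (NormedSpace.exp S)) = vnorm v S := by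
  rw [← spectralMatrix_eigenvalues hS, vnorm_spectralMatrix hv_perm, exp_spectralMatrix]
  set U := hS.eigenvectorUnitary
  set s := hS.eigenvalues
  obtain ⟨σ, hσ⟩ := exists_perm_eigenvalues_spectralMatrix U fun i ↦ Real.exp (s i)
  rw [mlog_eq_spectralMatrix (isHermitian_spectralMatrix _ _), vnorm_spectralMatrix hv_perm, hσ,
    ← hv_perm σ s]
  simp [Function.comp_def]

lemma exists_eq_matSqrt_mul_unitary {A : Matrix (Fin n) (Fin n) ℂ} (hA : IsUnit A) :
    ∃ W : unitaryGroup (Fin n) ℂ, A = matSqrt (A * Aᴴ) * W := by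
  have hAA : (A * Aᴴ).PosDef := .mul_conjTranspose_self A (vecMul_injective_of_isUnit hA)
  have hdet : IsUnit (matSqrt (A * Aᴴ)).det :=
    (isUnit_iff_isUnit_det _).1 (isUnit_matSqrt_s11 hAA)
  refine ⟨⟨(matSqrt (A * Aᴴ))⁻¹ * A, mem_unitaryGroup_iff.2 ?_⟩,
    (mul_nonsing_inv_cancel_left _ _ hdet).symm⟩
  calc (matSqrt (A * Aᴴ))⁻¹ * A * star ((matSqrt (A * Aᴴ))⁻¹ * A)
      = (matSqrt (A * Aᴴ))⁻¹ * (A * Aᴴ) * (matSqrt (A * Aᴴ))⁻¹ := by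
        rw [star_mul, star_eq_conjTranspose, star_eq_conjTranspose,
          (isHermitian_matSqrt_s11 _).inv.eq]
        simp only [mul_assoc]
    _ = 1 := by
        nth_rw 2 [← matSqrt_mul_matSqrt hAA.posSemidef]
        rw [nonsing_inv_mul_cancel_left _ _ hdet, mul_nonsing_inv _ hdet]

end SquareRootLogarithm

section Flats

variable {ι : Type*} [Fintype ι] [DecidableEq ι]

/-- For invertible `A` this parametrizes a flat of `P_n`, that is, a maximal family of positive
definite matrices simultaneously diagonalized by a congruence. -/
def flat (A : Matrix ι ι ℂ) (s : ι → ℝ) : Matrix ι ι ℂ :=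
  A * diagonal (fun i ↦ (Real.exp (s i) : ℂ)) * Aᴴ

lemma flat_zero (A : Matrix ι ι ℂ) : flat A 0 = A * Aᴴ := by
  simp [flat]

lemma flat_add (A : Matrix ι ι ℂ) (x y : ι → ℝ) :
    flat A (x + y) = flat (A * diagonal fun i ↦ (Real.exp (x i / 2) : ℂ)) y := by
  have hsplit : (fun i ↦ (Real.exp ((x + y) i) : ℂ)) =
      fun i ↦ (Real.exp (x i / 2) : ℂ) * Real.exp (y i) * Real.exp (x i / 2) := by
    funext i
    rw [← Complex.ofReal_mul, ← Complex.ofReal_mul, ← Real.exp_add, ← Real.exp_add, Pi.add_apply]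
    ring_nf
  rw [flat, flat, hsplit, conjTranspose_mul,
    (isHermitian_diagonal_ofReal fun i ↦ Real.exp (x i / 2)).eq, ← diagonal_mul_diagonal,
    ← diagonal_mul_diagonal]
  simp only [mul_assoc]

lemma flat_log_one_add (A : Matrix ι ι ℂ) {s : ι → ℝ} (hs : ∀ i, 0 < 1 + s i) :
    (flat A fun i ↦ Real.log (1 + s i)) = A * Aᴴ + A * diagonal (fun i ↦ (s i : ℂ)) * Aᴴ := by
  have hdiag : diagonal (fun i ↦ (Real.exp (Real.log (1 + s i)) : ℂ)) =
      1 + diagonal fun i ↦ (s i : ℂ) := by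
    rw [← diagonal_one, diagonal_add]
    simp only [Real.exp_log (hs _), Complex.ofReal_add, Complex.ofReal_one]
  rw [flat, hdiag, mul_add, mul_one, add_mul]

lemma posDef_flat {A : Matrix ι ι ℂ} (hA : IsUnit A) (s : ι → ℝ) : (flat A s).PosDef :=
  (PosDef.diagonal fun i ↦ by exact_mod_cast Real.exp_pos (s i)).mul_mul_conjTranspose_same
    (vecMul_injective_of_isUnit hA)

end Flats

section Geodesics

variable {n : ℕ} {A S X : Matrix (Fin n) (Fin n) ℂ}

/-- The point `X ^ (1/2) * exp S * X ^ (1/2)` reached at time one by the geodesic of `P_n` that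
leaves `X` in the Hermitian direction `S`. -/
def geodExp (X S : Matrix (Fin n) (Fin n) ℂ) : Matrix (Fin n) (Fin n) ℂ :=
  matSqrt X * NormedSpace.exp S * matSqrt X

lemma geodExp_zero (hX : X.PosSemidef) : geodExp X 0 = X := by
  rw [geodExp, NormedSpace.exp_zero, mul_one, matSqrt_mul_matSqrt hX]

lemma geodExp_spectralMatrix (X : Matrix (Fin n) (Fin n) ℂ) (U : unitaryGroup (Fin n) ℂ)
    (s : Fin n → ℝ) :
    geodExp X (spectralMatrix U s) = flat (matSqrt X * (U : Matrix (Fin n) (Fin n) ℂ)) s := by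
  rw [geodExp, exp_spectralMatrix, spectralMatrix, flat, conjTranspose_mul,
    (isHermitian_matSqrt_s11 X).eq, star_eq_conjTranspose]
  simp only [mul_assoc]

lemma posDef_geodExp (hX : X.PosDef) (hS : S.IsHermitian) : (geodExp X S).PosDef := by
  rw [← spectralMatrix_eigenvalues hS, geodExp_spectralMatrix]
  exact posDef_flat ((isUnit_matSqrt_s11 hX).mul (Unitary.isUnit_coe (U := hS.eigenvectorUnitary))) _

lemma dv_geodExp {v : (Fin n → ℝ) → ℝ} (hv_perm : PermInvariant v)
    (hX : X.PosDef) (hS : S.IsHermitian) : dv v X (geodExp X S) = vnorm v S := by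
  have hdet := (isUnit_iff_isUnit_det _).1 (isUnit_matSqrt_s11 hX)
  rw [dv, geodExp, mul_assoc, mul_nonsing_inv_cancel_right _ _ hdet,
    nonsing_inv_mul_cancel_left _ _ hdet, vnorm_mlog_exp hv_perm hS]

lemma exists_geodExp_eq {Y : Matrix (Fin n) (Fin n) ℂ} (hX : X.PosDef) (hY : Y.PosDef) :
    ∃ S : Matrix (Fin n) (Fin n) ℂ, S.IsHermitian ∧ geodExp X S = Y := by
  have hunit := isUnit_matSqrt_s11 hX
  have hdet := (isUnit_iff_isUnit_det _).1 hunit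
  have hZ : ((matSqrt X)⁻¹ * Y * (matSqrt X)⁻¹).PosDef := by
    have hinj := vecMul_injective_of_isUnit (isUnit_nonsing_inv_iff.2 hunit)
    simpa only [(isHermitian_matSqrt_s11 X).inv.eq] using hY.mul_mul_conjTranspose_same hinj
  refine ⟨mlog ((matSqrt X)⁻¹ * Y * (matSqrt X)⁻¹), isHermitian_mlog _, ?_⟩
  rw [geodExp, exp_mlog hZ, mul_assoc, nonsing_inv_mul_cancel_right _ _ hdet,
    mul_nonsing_inv_cancel_left _ _ hdet]

/-- Convexity of `f` along every geodesic of `P_n`. -/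
def IsGeodesicallyConvex (f : Matrix (Fin n) (Fin n) ℂ → ℝ) : Prop :=
  ∀ X : Matrix (Fin n) (Fin n) ℂ, X.PosDef → ∀ S : Matrix (Fin n) (Fin n) ℂ, S.IsHermitian →
    ConvexOn ℝ Set.univ fun t : ℝ ↦ f (geodExp X (t • S))

lemma convexOn_univ_of_line {E : Type*} [AddCommGroup E] [Module ℝ E] {F : E → ℝ}
    (hF : ∀ x d : E, ConvexOn ℝ Set.univ fun t : ℝ ↦ F (x + t • d)) :
    ConvexOn ℝ Set.univ F := by
  refine ⟨convex_univ, fun x _ y _ a b ha hb hab ↦ ?_⟩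
  have hline := (hF x (y - x)).2 (Set.mem_univ 0) (Set.mem_univ 1) ha hb hab
  have hpoint : x + b • (y - x) = a • x + b • y := by
    rw [eq_sub_of_add_eq hab]
    module
  simpa [hpoint] using hline

lemma IsGeodesicallyConvex.convexOn_flat {f : Matrix (Fin n) (Fin n) ℂ → ℝ}
    (hf : IsGeodesicallyConvex f) (hA : IsUnit A) :
    ConvexOn ℝ Set.univ fun s ↦ f (flat A s) := by
  refine convexOn_univ_of_line fun x d ↦ ?_
  set B := A * diagonal fun i ↦ (Real.exp (x i / 2) : ℂ)
  have hB : IsUnit B := hA.mul <| isUnit_diagonal.2 <| Pi.isUnit_iff.2 fun i ↦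
    isUnit_iff_ne_zero.2 <| by exact_mod_cast (Real.exp_pos _).ne'
  obtain ⟨W, hW⟩ := exists_eq_matSqrt_mul_unitary hB
  have hBB : (B * Bᴴ).PosDef := by
    rw [← flat_zero]
    exact posDef_flat hB 0
  have hgeod (t : ℝ) : flat A (x + t • d) = geodExp (B * Bᴴ) (t • spectralMatrix W d) := by
    rw [flat_add, smul_spectralMatrix, geodExp_spectralMatrix, ← hW]
  simpa only [hgeod] using hf _ hBB _ (isHermitian_spectralMatrix W d)

end Geodesics

section Derivative

open Filter Topology Asymptotics

lemma hasDerivAt_comp_of_locallyLipschitz {E E' : Type*} [NormedAddCommGroup E]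
    [NormedSpace ℝ E] [NormedAddCommGroup E'] [NormedSpace ℝ E'] {F : E → E'}
    (hF : LocallyLipschitz F) {γ δ : ℝ → E} {w : E} {c : E'} {t₀ : ℝ}
    (hγ : HasDerivAt γ w t₀) (hδ : HasDerivAt δ w t₀) (h₀ : γ t₀ = δ t₀)
    (hFγ : HasDerivAt (fun t ↦ F (γ t)) c t₀) : HasDerivAt (fun t ↦ F (δ t)) c t₀ := by
  obtain ⟨K, u, hu, hFu⟩ := hF (γ t₀)
  have hγu : ∀ᶠ t in 𝓝 t₀, γ t ∈ u := hγ.continuousAt hu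
  have hδu : ∀ᶠ t in 𝓝 t₀, δ t ∈ u := hδ.continuousAt (h₀ ▸ hu)
  have hbig : (fun t ↦ F (δ t) - F (γ t)) =O[𝓝 t₀] fun t ↦ δ t - γ t := by
    refine .of_bound K ?_
    filter_upwards [hγu, hδu] with t htγ htδ
    exact hFu.norm_sub_le htδ htγ
  have hlittle : (fun t ↦ δ t - γ t) =o[𝓝 t₀] fun t ↦ t - t₀ := by
    simpa [h₀] using (hδ.sub hγ).isLittleO
  have hdiff : HasDerivAt (fun t ↦ F (δ t) - F (γ t)) 0 t₀ := by
    rw [hasDerivAt_iff_isLittleO]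
    simpa [h₀] using hbig.trans_isLittleO hlittle
  simpa using hdiff.fun_add hFγ

variable {n : ℕ} {f : Matrix (Fin n) (Fin n) ℂ → ℝ} {G X S : Matrix (Fin n) (Fin n) ℂ}

/-- `G` represents the directional derivatives of `f` at `X` through the pairing
`(G, H) ↦ re (tr (G H))`, which is the trace pairing on Hermitian matrices. -/
def HasTraceGradientAt (f : Matrix (Fin n) (Fin n) ℂ → ℝ) (G X : Matrix (Fin n) (Fin n) ℂ) :
    Prop :=
  ∀ H : Matrix (Fin n) (Fin n) ℂ, H.IsHermitian →
    HasDerivAt (fun t : ℝ ↦ f (X + t • H)) (trace (G * H)).re 0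

lemma hasDerivAt_log_one_add_smul {ι : Type*} [Finite ι] (s : ι → ℝ) :
    HasDerivAt (fun (t : ℝ) (i : ι) ↦ Real.log (1 + (t • s) i)) s 0 := by
  have := Fintype.ofFinite ι
  rw [hasDerivAt_pi]
  intro i
  simpa using (((hasDerivAt_id (0 : ℝ)).mul_const (s i)).const_add 1).log (by simp)

lemma HasTraceGradientAt.hasDerivAt_flat_log {A : Matrix (Fin n) (Fin n) ℂ}
    (hfG : HasTraceGradientAt f G (A * Aᴴ)) (s : Fin n → ℝ) :
    HasDerivAt (fun t : ℝ ↦ f (flat A fun i ↦ Real.log (1 + (t • s) i)))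
      (trace (G * (A * diagonal (fun i ↦ (s i : ℂ)) * Aᴴ))).re 0 := by
  have hherm : (A * diagonal (fun i ↦ (s i : ℂ)) * Aᴴ).IsHermitian :=
    isHermitian_mul_mul_conjTranspose _ (isHermitian_diagonal_ofReal s)
  have hpos : ∀ᶠ t : ℝ in 𝓝 0, ∀ i, 0 < 1 + (t • s) i := by
    refine eventually_all.2 fun i ↦ ?_
    have hcont : Continuous fun t : ℝ ↦ 1 + (t • s) i := by fun_prop
    exact hcont.continuousAt.eventually (lt_mem_nhds (by simp))
  refine (hfG _ hherm).congr_of_eventuallyEq ?_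
  filter_upwards [hpos] with t ht
  rw [flat_log_one_add A ht, diagonal_ofReal_smul, mul_smul_comm, smul_mul_assoc]

lemma IsGeodesicallyConvex.hasDerivAt_geodExp (hf : IsGeodesicallyConvex f) (hX : X.PosDef)
    (hfG : HasTraceGradientAt f G X) (hS : S.IsHermitian) :
    HasDerivAt (fun t : ℝ ↦ f (geodExp X (t • S)))
      (trace (matSqrt X * G * matSqrt X * S)).re 0 := by
  set U := hS.eigenvectorUnitary
  set s := hS.eigenvalues
  have hspec : spectralMatrix U s = S := spectralMatrix_eigenvalues hS
  set A := matSqrt X * (U : Matrix (Fin n) (Fin n) ℂ)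
  have hAunit : IsUnit A := (isUnit_matSqrt_s11 hX).mul (Unitary.isUnit_coe (U := U))
  have hAA : A * Aᴴ = X := by
    rw [← flat_zero, ← geodExp_spectralMatrix, ← zero_smul ℝ s, ← smul_spectralMatrix, zero_smul,
      geodExp_zero hX.posSemidef]
  have hflat (t : ℝ) : geodExp X (t • S) = flat A (t • s) := by
    rw [← hspec, smul_spectralMatrix, geodExp_spectralMatrix]
  have hAS : A * diagonal (fun i ↦ (s i : ℂ)) * Aᴴ = matSqrt X * S * matSqrt X := by
    rw [← hspec]
    simp only [A, spectralMatrix, conjTranspose_mul, (isHermitian_matSqrt_s11 X).eq, mul_assoc,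
      star_eq_conjTranspose]
  have hline : HasDerivAt (fun t : ℝ ↦ f (flat A fun i ↦ Real.log (1 + (t • s) i)))
      (trace (matSqrt X * G * matSqrt X * S)).re 0 := by
    rw [← hAA] at hfG
    convert hfG.hasDerivAt_flat_log s using 2
    rw [hAS, ← mul_assoc G, trace_mul_comm _ (matSqrt X)]
    simp only [mul_assoc]
  simp only [hflat]
  exact hasDerivAt_comp_of_locallyLipschitz (hf.convexOn_flat hAunit).locallyLipschitz
    (hasDerivAt_log_one_add_smul s) (by simpa using (hasDerivAt_id (0 : ℝ)).smul_const s)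
    (by ext; simp) hline

end Derivative

section Slope

open Filter Topology

lemma neg_le_of_hasDerivAt_of_sub_le {φ : ℝ → ℝ} {c C : ℝ} (hφ : HasDerivAt φ c 0)
    (hC : ∀ t, 0 < t → φ 0 - φ t ≤ C * t) : -C ≤ c := by
  refine ge_of_tendsto (hφ.tendsto_slope.mono_left (nhdsGT_le_nhdsNE 0)) ?_
  filter_upwards [self_mem_nhdsWithin] with t (ht : 0 < t)
  rw [slope_def_field, sub_zero, le_div_iff₀ ht]
  linarith [hC t ht]

lemma sSup_max_zero_div_eq_of_isLeast {α : Type*} {P : α → Prop} {δ d : α → ℝ} {K : ℝ}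
    (hd : ∀ y, P y → 0 ≤ d y) (hK : IsLeast {C | 0 ≤ C ∧ ∀ y, P y → δ y ≤ C * d y} K) :
    sSup {r | ∃ y, P y ∧ r = max 0 (δ y) / d y} = K := by
  obtain ⟨⟨hK0, hδK⟩, hKmin⟩ := hK
  set R := {r | ∃ y, P y ∧ r = max 0 (δ y) / d y}
  have hRK : ∀ r ∈ R, r ≤ K := by
    rintro _ ⟨y, hy, rfl⟩
    exact div_le_of_le_mul₀ (hd y hy) hK0 (max_le (mul_nonneg hK0 (hd y hy)) (hδK y hy))
  have hR0 : ∀ r ∈ R, 0 ≤ r := by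
    rintro _ ⟨y, hy, rfl⟩
    exact div_nonneg (le_max_left _ _) (hd y hy)
  refine le_antisymm (Real.sSup_le hRK hK0) (hKmin ⟨Real.sSup_nonneg hR0, fun y hy ↦ ?_⟩)
  obtain hdy | hdy := (hd y hy).eq_or_lt
  · simpa [← hdy] using hδK y hy
  · rw [← div_le_iff₀ hdy]
    calc δ y / d y ≤ max 0 (δ y) / d y := by gcongr; exact le_max_right _ _
      _ ≤ sSup R := le_csSup ⟨K, hRK⟩ ⟨y, hy, rfl⟩

variable {n : ℕ} {p : Seminorm ℝ (Fin n → ℝ)} {q : (Fin n → ℝ) → ℝ}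
  {f : Matrix (Fin n) (Fin n) ℂ → ℝ} {G X : Matrix (Fin n) (Fin n) ℂ}

lemma isHermitian_matSqrt_conj (hG : G.IsHermitian) :
    (matSqrt X * G * matSqrt X).IsHermitian := by
  simpa only [(isHermitian_matSqrt_s11 X).eq] using isHermitian_mul_mul_conjTranspose (matSqrt X) hG

lemma IsGeodesicallyConvex.sub_le_vnorm_mul_dv (hf : IsGeodesicallyConvex f)
    (hq : IsDualNorm p q) (hp_perm : PermInvariant p)
    (hX : X.PosDef) (hG : G.IsHermitian) (hfG : HasTraceGradientAt f G X)
    {Y : Matrix (Fin n) (Fin n) ℂ} (hY : Y.PosDef) :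
    f X - f Y ≤ vnorm q (matSqrt X * G * matSqrt X) * dv p X Y := by
  obtain ⟨S, hS, rfl⟩ := exists_geodExp_eq hX hY
  have htangent : (trace (matSqrt X * G * matSqrt X * S)).re ≤ f (geodExp X S) - f X := by
    have hslope := (hf X hX S hS).le_slope_of_hasDerivAt (Set.mem_univ 0) (Set.mem_univ 1)
      one_pos (hf.hasDerivAt_geodExp hX hfG hS)
    simpa [slope_def_field, geodExp_zero hX.posSemidef] using hslope
  calc f X - f (geodExp X S)
      ≤ (trace (matSqrt X * G * matSqrt X * (-1 : ℝ) • S)).re := by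
        rw [neg_one_smul, mul_neg, trace_neg, Complex.neg_re]
        linarith
    _ ≤ vnorm q (matSqrt X * G * matSqrt X) * vnorm p ((-1 : ℝ) • S) :=
        hq.re_trace_mul_le hp_perm (isHermitian_matSqrt_conj hG) (hS.smul (.all _))
    _ = vnorm q (matSqrt X * G * matSqrt X) * dv p X (geodExp X S) := by
        rw [vnorm_smul hp_perm hS, abs_neg, abs_one, one_mul, dv_geodExp hp_perm hX hS]

lemma IsGeodesicallyConvex.vnorm_le_of_sub_le_mul_dv (hf : IsGeodesicallyConvex f)
    (hq : IsDualNorm p q) (hp_perm : PermInvariant p)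
    (hX : X.PosDef) (hG : G.IsHermitian) (hfG : HasTraceGradientAt f G X) {C : ℝ} (hC : 0 ≤ C)
    (hslope : ∀ Y : Matrix (Fin n) (Fin n) ℂ, Y.PosDef → f X - f Y ≤ C * dv p X Y) :
    vnorm q (matSqrt X * G * matSqrt X) ≤ C := by
  obtain ⟨S, hS, hpS, hqS⟩ :=
    hq.exists_re_trace_mul_eq hp_perm (isHermitian_matSqrt_conj (X := X) hG)
  have hderiv := hf.hasDerivAt_geodExp hX hfG hS.neg
  rw [mul_neg, trace_neg, Complex.neg_re, hqS] at hderiv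
  refine neg_le_neg_iff.1 (neg_le_of_hasDerivAt_of_sub_le hderiv fun t ht ↦ ?_)
  have htS : (t • -S).IsHermitian := hS.neg.smul (.all t)
  calc f (geodExp X ((0 : ℝ) • -S)) - f (geodExp X (t • -S))
      = f X - f (geodExp X (t • -S)) := by rw [zero_smul, geodExp_zero hX.posSemidef]
    _ ≤ C * dv p X (geodExp X (t • -S)) := hslope _ (posDef_geodExp hX htS)
    _ = C * (t * vnorm p S) := by
        rw [dv_geodExp hp_perm hX htS, smul_neg, ← neg_smul, vnorm_smul hp_perm hS, abs_neg,
          abs_of_pos ht]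
    _ ≤ C * t := by
        gcongr
        exact mul_le_of_le_one_right ht.le hpS

end Slope

theorem slope_eq_dual_gradient_norm_general {n : ℕ} (p : Seminorm ℝ (Fin n → ℝ))
    (q : (Fin n → ℝ) → ℝ) (hp_perm : PermInvariant p)
    (hq : IsDualNorm p q) (f : Matrix (Fin n) (Fin n) ℂ → ℝ) (hf : IsGeodesicallyConvex f)
    (X : Matrix (Fin n) (Fin n) ℂ) (hX : X.PosDef) (G : Matrix (Fin n) (Fin n) ℂ)
    (hG : G.IsHermitian) (hfG : HasTraceGradientAt f G X) :
    sSup {r : ℝ | ∃ Y : Matrix (Fin n) (Fin n) ℂ, Y.PosDef ∧ Y ≠ X ∧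
        r = max 0 (f X - f Y) / dv p X Y} = vnorm q (matSqrt X * G * matSqrt X) := by
  simp only [← and_assoc]
  refine sSup_max_zero_div_eq_of_isLeast (fun Y _ ↦ vnorm_nonneg _) ⟨⟨?_, ?_⟩, ?_⟩
  · rw [vnorm_of_isHermitian_s11 (isHermitian_matSqrt_conj hG)]
    exact hq.nonneg _
  · exact fun Y hY ↦ hf.sub_le_vnorm_mul_dv hq hp_perm hX hG hfG hY.1
  · rintro C ⟨hC, hslope⟩
    refine hf.vnorm_le_of_sub_le_mul_dv hq hp_perm hX hG hfG hC fun Y hY ↦ ?_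
    obtain rfl | hYX := eq_or_ne Y X
    · rw [sub_self]
      exact mul_nonneg hC (vnorm_nonneg _)
    · exact hslope Y ⟨hY, hYX⟩

/-- The global slope of a differentiable geodesically convex function `f` on `P_n`
w.r.t. `d_v` equals the dual gradient norm `‖X^{1/2} ∇f(X) X^{1/2}‖_{v*}`. -/
theorem slope_eq_dual_gradient_norm {n : ℕ} (v vs : (Fin n → ℝ) → ℝ)
    (hv_eq0 : ∀ x, v x = 0 ↔ x = 0)
    (hv_smul : ∀ (c : ℝ) (x : Fin n → ℝ), v (c • x) = |c| * v x)
    (hv_add : ∀ x y, v (x + y) ≤ v x + v y)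
    (hv_perm : ∀ (σ : Equiv.Perm (Fin n)) (x : Fin n → ℝ), v (x ∘ σ) = v x)
    (hvs : ∀ x, IsGreatest {r : ℝ | ∃ y : Fin n → ℝ, v y ≤ 1 ∧ r = ∑ i, x i * y i} (vs x))
    (f : Matrix (Fin n) (Fin n) ℂ → ℝ)
    (hconv : ∀ X : Matrix (Fin n) (Fin n) ℂ, X.PosDef →
      ∀ S : Matrix (Fin n) (Fin n) ℂ, S.IsHermitian →
        ConvexOn ℝ Set.univ (fun t : ℝ => f (matSqrt X * NormedSpace.exp (t • S) * matSqrt X)))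
    (Gf : Matrix (Fin n) (Fin n) ℂ → Matrix (Fin n) (Fin n) ℂ)
    (hGf_herm : ∀ X : Matrix (Fin n) (Fin n) ℂ, X.PosDef → (Gf X).IsHermitian)
    (hGf : ∀ X : Matrix (Fin n) (Fin n) ℂ, X.PosDef →
      ∀ H : Matrix (Fin n) (Fin n) ℂ, H.IsHermitian →
        HasDerivAt (fun t : ℝ => f (X + t • H)) ((Matrix.trace (Gf X * H)).re) 0)
    (X : Matrix (Fin n) (Fin n) ℂ) (hX : X.PosDef) :
    sSup {r : ℝ | ∃ Y : Matrix (Fin n) (Fin n) ℂ, Y.PosDef ∧ Y ≠ X ∧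
        r = max 0 (f X - f Y) / dv v X Y}
      = vnorm vs (matSqrt X * Gf X * matSqrt X) := by
  exact slope_eq_dual_gradient_norm_general (Seminorm.of v hv_add hv_smul) vs hv_perm hvs f hconv
    X hX (Gf X) (hGf_herm X hX) (hGf X hX)
end
end
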